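/- Fix positive integers c, m, s, let A_1,…,A_s be nonzero 0-1 matrices each with c rows and m columns, and for n ≥ m let I_n ⊆ R_n be the ideal generated by the Sym(n)-orbits of x^{A_1},…,x^{A_s} (each A_i regarded as a c×n matrix by appending zero columns). Then: (1) there exist a polynomial p with rational coefficients of degree at most binom(c,⌊c/2⌋) − 1 and an integer N such that for all n ≥ N, the number of Sym(n)-orbits on the set of minimal monomial generators of I_n^∨ equals p(n); (2) there exist integers α, β, a polynomial q with rational coefficients, and an integer N' such that for all n ≥ N', the least degree of a minimal generator of I_n^∨ equals d(n) = αn + β, and the number of Sym(n)-orbits on the set of minimal monomial generators of I_n^∨ of degree d(n) equals q(n). -/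

import Mathlib

open MvPolynomial Finset

noncomputable section

/-- The squarefree monomial `x^B` with exponent matrix `B`, columns given as subsets of `[c]`. -/
def matMon (K : Type*) [CommSemiring K] {c n : ℕ}
    (B : Fin n → Finset (Fin c)) : MvPolynomial (Fin c × Fin n) K :=
  ∏ j : Fin n, ∏ i ∈ B j, X (i, j)

/-- Pad a `c × m` matrix with zero columns to a `c × n` matrix. -/
def pad {c m : ℕ} (n : ℕ) (A : Fin m → Finset (Fin c)) : Fin n → Finset (Fin c) :=
  fun j => if h : (j : ℕ) < m then A ⟨j, h⟩ else ∅

/-- The ideal `I_n ⊆ R_n` generated by the `Sym(n)`-orbits of `x^{A_1}, …, x^{A_s}`. -/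
def chainIdeal (K : Type*) [CommSemiring K] {c m s : ℕ}
    (A : Fin s → Fin m → Finset (Fin c)) (n : ℕ) :
    Ideal (MvPolynomial (Fin c × Fin n) K) :=
  Ideal.span {p | ∃ (i : Fin s) (σ : Equiv.Perm (Fin n)),
    p = rename (fun v : Fin c × Fin n => (v.1, σ v.2)) (matMon K (pad n (A i)))}

/-- The Alexander dual of a squarefree monomial ideal. -/
def dualIdeal (K : Type*) [CommSemiring K] {c n : ℕ}
    (I : Ideal (MvPolynomial (Fin c × Fin n) K)) : Ideal (MvPolynomial (Fin c × Fin n) K) :=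
  Ideal.span {p | ∃ B : Fin n → Finset (Fin c),
    matMon K (fun j => (B j)ᶜ) ∉ I ∧ p = matMon K B}

/-- `x^B` is a minimal (monomial) generator of `I`. -/
def IsMinGen (K : Type*) [CommSemiring K] {c n : ℕ}
    (I : Ideal (MvPolynomial (Fin c × Fin n) K)) (B : Fin n → Finset (Fin c)) : Prop :=
  matMon K B ∈ I ∧
    ∀ B'' : Fin n → Finset (Fin c), (∀ j, B'' j ⊆ B j) → B'' ≠ B → matMon K B'' ∉ I

/-- The `Sym(n)`-orbit of the squarefree monomial `x^B`. -/
def orbitOf (K : Type*) [CommSemiring K] {c n : ℕ} (B : Fin n → Finset (Fin c)) :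
    Set (MvPolynomial (Fin c × Fin n) K) :=
  {q | ∃ σ : Equiv.Perm (Fin n),
    q = rename (fun v : Fin c × Fin n => (v.1, σ v.2)) (matMon K B)}

/-!
A minimal generator of `I_n^∨` is a minimal cover: a `c × n` matrix whose columns meet every
placement of the columns of a pattern `A_i`. Up to `Sym(n)` it is determined by its column
multiplicities `v : Finset (Fin c) → ℕ`, and since the patterns have only `m` columns, being the
multiplicity vector of a minimal cover depends only on `v` truncated at height `m + 1`. The set
of these vectors is therefore, up to finitely many elements, a disjoint union of finitely many
translated coordinate orthants `g + ℕ^S` with `S ≠ ∅`, each of which has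
`multichoose #S (n - ∑ g)` points with coordinate sum `n`, a polynomial of degree `#S - 1`.
If `S` contained comparable columns `T ⊂ T'`, replacing one of the many copies of `T'` by `T`
would contradict minimality; so `S` is an antichain and Sperner's theorem bounds `#S`. On each
orthant the degree is a linear form, whose minimum at coordinate sum `n` is a linear function of
`n` attained on a smaller orthant of the same kind.
-/

section EventuallyPolynomial

/-- `f n` agrees for all large `n` with a rational polynomial in `n` of degree at most `d`. -/
def IsEventuallyPolynomial (f : ℕ → ℕ) (d : ℕ) : Prop :=
  ∃ p : Polynomial ℚ, p.degree ≤ d ∧ ∀ᶠ n : ℕ in Filter.atTop, (f n : ℚ) = p.eval (n : ℚ)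

lemma IsEventuallyPolynomial.congr {f g : ℕ → ℕ} {d : ℕ} (hf : IsEventuallyPolynomial f d)
    (h : ∀ᶠ n in Filter.atTop, g n = f n) : IsEventuallyPolynomial g d := by
  obtain ⟨p, hdeg, hp⟩ := hf
  refine ⟨p, hdeg, ?_⟩
  filter_upwards [h, hp] with n h hp
  rw [h, hp]

lemma IsEventuallyPolynomial.mono {f : ℕ → ℕ} {d e : ℕ} (hf : IsEventuallyPolynomial f d)
    (h : d ≤ e) : IsEventuallyPolynomial f e := by
  obtain ⟨p, hdeg, hp⟩ := hf
  exact ⟨p, hdeg.trans (mod_cast h), hp⟩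

lemma isEventuallyPolynomial_multichoose_sub (d a : ℕ) :
    IsEventuallyPolynomial (fun n => (d + 1).multichoose (n - a)) d := by
  refine ⟨Polynomial.preHilbertPoly ℚ d a, ?_, ?_⟩
  · rw [← Polynomial.natDegree_le_iff_degree_le, Polynomial.natDegree_preHilbertPoly]
  · filter_upwards [Filter.eventually_ge_atTop a] with n hn
    rw [Polynomial.preHilbertPoly_eq_choose_sub_add ℚ d hn, Nat.multichoose_eq,
      show d + 1 + (n - a) - 1 = n - a + d by lia, Nat.choose_symm_add]

lemma IsEventuallyPolynomial.card_of_fiberwise {α β : Type*} [DecidableEq β]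
    {s : ℕ → Finset α} {φ : α → β} {G : Finset β} {d : ℕ}
    (hG : ∀ᶠ n in Filter.atTop, ∀ a ∈ s n, φ a ∈ G)
    (hf : ∀ b ∈ G, IsEventuallyPolynomial (fun n => #{a ∈ s n | φ a = b}) d) :
    IsEventuallyPolynomial (fun n => #(s n)) d := by
  choose! p hdeg hp using hf
  refine ⟨∑ b ∈ G, p b, Polynomial.mem_degreeLE.1 <|
    sum_mem fun b hb => Polynomial.mem_degreeLE.2 (hdeg b hb), ?_⟩
  filter_upwards [hG, (Filter.eventually_all_finset G).2 hp] with n hG hp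
  rw [card_eq_sum_card_fiberwise hG, Polynomial.eval_finsetSum, Nat.cast_sum]
  exact sum_congr rfl hp

lemma exists_eventually_lt_of_line_ne {ι : Type*} {G : Finset ι} (hG : G.Nonempty)
    (line : ι → ℤ × ℤ) :
    ∃ i ∈ G, ∀ᶠ n : ℕ in Filter.atTop, ∀ j ∈ G, line j ≠ line i →
      (line i).1 * n + (line i).2 < (line j).1 * n + (line j).2 := by
  obtain ⟨i, hi, hmin⟩ := exists_min_image G (fun j => toLex (line j)) hG
  refine ⟨i, hi, (Filter.eventually_all_finset G).2 fun j hj => ?_⟩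
  obtain hslope | ⟨hslope, hconst⟩ := Prod.Lex.toLex_le_toLex.1 (hmin j hj)
  · filter_upwards [Filter.eventually_gt_atTop ((line i).2 - (line j).2).toNat] with n hn _
    have hn' : (line i).2 - (line j).2 < n := Int.toNat_lt' (by lia) |>.1 hn
    nlinarith
  · refine .of_forall fun n hne => ?_
    have : (line i).2 ≠ (line j).2 := fun h => hne (Prod.ext hslope h).symm
    rw [hslope]
    lia

/-- The minimum of `W` is eventually given by the lexicographically least line, and only the
pieces with this line contribute minimizers. -/
lemma exists_isLeast_of_fiberwise_line {α β : Type*} [DecidableEq β] {s : ℕ → Finset α}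
    {φ : α → β} {G : Finset β} {W : α → ℤ} {line : β → ℤ × ℤ} {d : ℕ} (hG : G.Nonempty)
    (hs : ∀ᶠ n in Filter.atTop, ∀ a ∈ s n, φ a ∈ G)
    (hle : ∀ n, ∀ a ∈ s n, φ a ∈ G → (line (φ a)).1 * n + (line (φ a)).2 ≤ W a)
    (hattained : ∀ b ∈ G, ∀ᶠ n : ℕ in Filter.atTop,
      ∃ a ∈ s n, φ a = b ∧ W a = (line b).1 * n + (line b).2)
    (hcard : ∀ b ∈ G, IsEventuallyPolynomial
      (fun n => #{a ∈ s n | φ a = b ∧ W a = (line b).1 * n + (line b).2}) d) :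
    ∃ k l : ℤ, (∀ᶠ n : ℕ in Filter.atTop, IsLeast (W '' s n) (k * n + l)) ∧
      IsEventuallyPolynomial (fun n => #{a ∈ s n | W a = k * n + l}) d := by
  obtain ⟨b₀, hb₀, hlead⟩ := exists_eventually_lt_of_line_ne hG line
  have hbound : ∀ᶠ n : ℕ in Filter.atTop, ∀ a ∈ s n, φ a ∈ G ∧
      (line b₀).1 * n + (line b₀).2 ≤ W a ∧
      (W a = (line b₀).1 * n + (line b₀).2 → line (φ a) = line b₀) := by
    filter_upwards [hlead, hs] with n hlead hs a ha
    have hle := hle n a ha (hs a ha)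
    by_cases hline : line (φ a) = line b₀
    · exact ⟨hs a ha, hline ▸ hle, fun _ => hline⟩
    · have hlt := (hlead _ (hs a ha) hline).trans_le hle
      exact ⟨hs a ha, hlt.le, fun h => absurd h hlt.ne'⟩
  refine ⟨(line b₀).1, (line b₀).2, ?_, ?_⟩
  · filter_upwards [hbound, hattained b₀ hb₀] with n hbound ⟨a, ha, _, haW⟩
    exact ⟨⟨a, ha, haW⟩, by rintro _ ⟨a, ha, rfl⟩; exact (hbound a ha).2.1⟩
  · refine .card_of_fiberwise (φ := φ) (G := {b ∈ G | line b = line b₀}) ?_ fun b hb => ?_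
    · filter_upwards [hbound] with n hbound a ha
      obtain ⟨ha, haW⟩ := mem_filter.1 ha
      obtain ⟨haG, -, hline⟩ := hbound a ha
      exact mem_filter.2 ⟨haG, hline haW⟩
    · obtain ⟨hb, hline⟩ := mem_filter.1 hb
      simpa only [filter_filter, hline, and_comm] using hcard b hb

end EventuallyPolynomial

section Cones

variable {P : Type*}

/-- The translated coordinate orthant `g + ℕ^S` inside `ℕ^P`. -/
def coordCone (g : P → ℕ) (S : Finset P) : Set (P → ℕ) :=
  {v | (∀ t ∉ S, v t = g t) ∧ g ≤ v}

/-- Entrywise truncation of a vector at height `M`. -/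
def truncate (M : ℕ) (v : P → ℕ) : P → ℕ := fun t => min (v t) M

/-- Membership in `V` depends only on the entries truncated at height `M`. -/
def IsTruncationInvariant (M : ℕ) (V : Set (P → ℕ)) : Prop :=
  ∀ v, truncate M v ∈ V ↔ v ∈ V

lemma IsTruncationInvariant.mem_iff_of_truncate_eq {M : ℕ} {V : Set (P → ℕ)}
    (hV : IsTruncationInvariant M V) {u v : P → ℕ} (h : truncate M u = truncate M v) :
    u ∈ V ↔ v ∈ V := by
  rw [← hV u, h, hV v]

lemma mul_le_mul_of_mem_coordCone {u : P → ℤ} {g v : P → ℕ} {S : Finset P}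
    (hu : ∀ t ∈ S, 0 ≤ u t) (hv : v ∈ coordCone g S) (t : P) : g t * u t ≤ v t * u t := by
  by_cases ht : t ∈ S
  · exact mul_le_mul_of_nonneg_right (mod_cast hv.2 t) (hu t ht)
  · rw [hv.1 t ht]

lemma coordCone_mono (g : P → ℕ) {F S : Finset P} (h : F ⊆ S) : coordCone g F ⊆ coordCone g S :=
  fun _ hv => ⟨fun t ht => hv.1 t fun htF => ht (h htF), hv.2⟩

variable [Fintype P]

/-- The coordinates in which `g` attains the truncation height `M`; they span the cone of
all vectors with truncation `g`. -/
def saturated (M : ℕ) (g : P → ℕ) : Finset P := {t | g t = M}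

/-- The total weight `∑ v t * w t` of a vector `v`, for integer weights `w`. -/
def weight (w : P → ℤ) (v : P → ℕ) : ℤ := ∑ t, v t * w t

open Classical in
/-- The vectors of `V` with coordinate sum `n`. -/
def sumSlice (V : Set (P → ℕ)) (n : ℕ) : Finset (P → ℕ) := {v ∈ piAntidiag univ n | v ∈ V}

open Classical in
/-- The truncations at height `M` of those vectors of a truncation-invariant set `V` that lie in
an infinite fibre of the truncation. -/
def unboundedCells (M : ℕ) (V : Set (P → ℕ)) : Finset (P → ℕ) :=
  {g ∈ Fintype.piFinset fun _ => range (M + 1) | g ∈ V ∧ (saturated M g).Nonempty}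

lemma mem_sumSlice {V : Set (P → ℕ)} {n : ℕ} {v : P → ℕ} :
    v ∈ sumSlice V n ↔ ∑ t, v t = n ∧ v ∈ V := by
  simp [sumSlice]

lemma mem_saturated {M : ℕ} {g : P → ℕ} {t : P} : t ∈ saturated M g ↔ g t = M := by
  simp [saturated]

lemma mem_unboundedCells {M : ℕ} {V : Set (P → ℕ)} {g : P → ℕ} :
    g ∈ unboundedCells M V ↔ (∀ t, g t ≤ M) ∧ g ∈ V ∧ (saturated M g).Nonempty := by
  simp [unboundedCells]

lemma sumSlice_coordCone [DecidableEq P] {g : P → ℕ} {n : ℕ} (hn : ∑ t, g t ≤ n) (S : Finset P) :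
    sumSlice (coordCone g S) n = (piAntidiag S (n - ∑ t, g t)).map (addLeftEmbedding g) := by
  have sum_restrict {u : P → ℕ} (hu : ∀ t, u t ≠ 0 → t ∈ S) : ∑ t, u t = ∑ t ∈ S, u t :=
    (sum_subset (subset_univ S) fun t _ ht => of_not_not (mt (hu t) ht)).symm
  ext v
  simp only [mem_sumSlice, mem_map, mem_piAntidiag, addLeftEmbedding_apply]
  constructor
  · rintro ⟨hsum, heq, hle⟩
    have hsupp : ∀ t, (v - g) t ≠ 0 → t ∈ S := fun t ht => by
      by_contra hS
      exact ht (by simp [heq t hS])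
    refine ⟨v - g, ⟨?_, hsupp⟩, add_tsub_cancel_of_le hle⟩
    rw [← sum_restrict hsupp, ← hsum]
    exact sum_tsub_distrib _ fun t _ => hle t
  · rintro ⟨u, ⟨hsum, hsupp⟩, rfl⟩
    refine ⟨?_, fun t ht => by simpa using mt (hsupp t) ht, le_self_add⟩
    rw [← sum_restrict hsupp] at hsum
    simp only [Pi.add_apply, sum_add_distrib, hsum]
    lia

lemma card_sumSlice_coordCone {g : P → ℕ} {n : ℕ} (hn : ∑ t, g t ≤ n) (S : Finset P) :
    #(sumSlice (coordCone g S) n) = (#S).multichoose (n - ∑ t, g t) := by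
  classical
  rw [sumSlice_coordCone hn, card_map, ← card_finsuppAntidiag_nat_eq_multichoose, finsuppAntidiag,
    card_map, card_attach]

lemma isEventuallyPolynomial_card_sumSlice_coordCone (g : P → ℕ) {S : Finset P} {d : ℕ}
    (hS : S.Nonempty) (hd : #S ≤ d + 1) :
    IsEventuallyPolynomial (fun n => #(sumSlice (coordCone g S) n)) d := by
  obtain ⟨k, hk⟩ := Nat.exists_eq_succ_of_ne_zero hS.card_ne_zero
  refine ((isEventuallyPolynomial_multichoose_sub k (∑ t, g t)).mono (by lia)).congr ?_
  filter_upwards [Filter.eventually_ge_atTop (∑ t, g t)] with n hn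
  rw [card_sumSlice_coordCone hn, hk]

lemma sumSlice_coordCone_nonempty {g : P → ℕ} {S : Finset P} {n : ℕ} (hS : S.Nonempty)
    (hn : ∑ t, g t ≤ n) : (sumSlice (coordCone g S) n).Nonempty := by
  obtain ⟨k, hk⟩ := Nat.exists_eq_succ_of_ne_zero hS.card_ne_zero
  rw [← card_pos, card_sumSlice_coordCone hn, hk, Nat.multichoose_eq]
  exact Nat.choose_pos (by lia)

lemma truncate_eq_iff {M : ℕ} {g v : P → ℕ} (hg : ∀ t, g t ≤ M) :
    truncate M v = g ↔ v ∈ coordCone g (saturated M g) := by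
  simp only [coordCone, Set.mem_ofPred_eq, Pi.le_def, mem_saturated, funext_iff, truncate,
    ← forall_and]
  exact forall_congr' fun t => by have := hg t; lia

lemma truncate_mem_unboundedCells {M : ℕ} {V : Set (P → ℕ)} {v : P → ℕ}
    (hV : IsTruncationInvariant M V) (hv : v ∈ V) (hM : ∃ t, M < v t) :
    truncate M v ∈ unboundedCells M V := by
  obtain ⟨t, ht⟩ := hM
  exact mem_unboundedCells.2 ⟨fun _ => min_le_right _ _, (hV v).2 hv, t,
    mem_saturated.2 (min_eq_right ht.le)⟩

lemma unboundedCells_nonempty {M : ℕ} {V : Set (P → ℕ)} (hV : IsTruncationInvariant M V)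
    (hinf : V.Infinite) : (unboundedCells M V).Nonempty := by
  classical
  obtain ⟨v, hv, hbox⟩ := hinf.exists_notMem_finset (Fintype.piFinset fun _ => range (M + 1))
  refine ⟨_, truncate_mem_unboundedCells hV hv ?_⟩
  simpa [Nat.succ_le_iff] using hbox

lemma eventually_truncate_mem_unboundedCells {M : ℕ} {V : Set (P → ℕ)}
    (hV : IsTruncationInvariant M V) :
    ∀ᶠ n in Filter.atTop, ∀ v ∈ sumSlice V n, truncate M v ∈ unboundedCells M V := by
  filter_upwards [Filter.eventually_gt_atTop (∑ _t : P, M)] with n hn v hv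
  obtain ⟨hsum, hv⟩ := mem_sumSlice.1 hv
  obtain ⟨t, -, ht⟩ := exists_lt_of_sum_lt (hn.trans_eq hsum.symm)
  exact truncate_mem_unboundedCells hV hv ⟨t, ht⟩

lemma filter_truncate_sumSlice {M : ℕ} {V : Set (P → ℕ)} {g : P → ℕ}
    (hV : IsTruncationInvariant M V) (hg : g ∈ unboundedCells M V) (n : ℕ) :
    {v ∈ sumSlice V n | truncate M v = g} = sumSlice (coordCone g (saturated M g)) n := by
  obtain ⟨hgM, hgV, -⟩ := mem_unboundedCells.1 hg
  ext v
  rw [mem_filter, mem_sumSlice, mem_sumSlice, ← truncate_eq_iff hgM, and_assoc]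
  refine and_congr_right fun _ => and_iff_right_of_imp ?_
  rintro rfl
  exact (hV v).1 hgV

theorem isEventuallyPolynomial_card_sumSlice {M d : ℕ} {V : Set (P → ℕ)}
    (hV : IsTruncationInvariant M V)
    (hd : ∀ g ∈ unboundedCells M V, #(saturated M g) ≤ d + 1) :
    IsEventuallyPolynomial (fun n => #(sumSlice V n)) d := by
  classical
  refine .card_of_fiberwise (eventually_truncate_mem_unboundedCells hV) fun g hg => ?_
  simp only [filter_truncate_sumSlice hV hg]
  exact isEventuallyPolynomial_card_sumSlice_coordCone g (mem_unboundedCells.1 hg).2.2 (hd g hg)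

lemma weight_eq_mul_sum_add (w : P → ℤ) (v : P → ℕ) (a : ℤ) :
    weight w v = a * (∑ t, v t : ℕ) + weight (fun t => w t - a) v := by
  simp only [weight, mul_sub, sum_sub_distrib, ← sum_mul]
  push_cast
  ring

lemma weight_le_weight_of_mem_coordCone {u : P → ℤ} {g v : P → ℕ} {S : Finset P}
    (hu : ∀ t ∈ S, 0 ≤ u t) (hv : v ∈ coordCone g S) : weight u g ≤ weight u v :=
  sum_le_sum fun t _ => mul_le_mul_of_mem_coordCone hu hv t

lemma weight_eq_weight_iff_of_mem_coordCone {u : P → ℤ} {g v : P → ℕ} {S : Finset P}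
    (hu : ∀ t ∈ S, 0 ≤ u t) (hv : v ∈ coordCone g S) :
    weight u v = weight u g ↔ v ∈ coordCone g {t ∈ S | u t = 0} := by
  rw [eq_comm, weight, weight,
    sum_eq_sum_iff_of_le fun t _ => mul_le_mul_of_mem_coordCone hu hv t, coordCone,
    Set.mem_ofPred_eq, and_iff_left hv.2]
  refine forall_congr' fun t => ?_
  have hfix := hv.1 t
  simp only [mem_univ, true_imp_iff, mul_eq_mul_right_iff, Nat.cast_inj, mem_filter]
  grind

/-- The slope is the least weight on `S`: subtracting it from `w` leaves weights that are
nonnegative on `S`, hence monotone on the cone, and that vanish exactly on `F` within `S`. -/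
lemma exists_line_le_weight (w : P → ℤ) (g : P → ℕ) {S : Finset P} (hS : S.Nonempty) :
    ∃ (line : ℤ × ℤ) (F : Finset P), F ⊆ S ∧ F.Nonempty ∧ ∀ v ∈ coordCone g S,
      line.1 * (∑ t, v t : ℕ) + line.2 ≤ weight w v ∧
      (weight w v = line.1 * (∑ t, v t : ℕ) + line.2 ↔ v ∈ coordCone g F) := by
  obtain ⟨t₀, ht₀, hmin⟩ := exists_min_image S w hS
  have hu : ∀ t ∈ S, 0 ≤ w t - w t₀ := fun t ht => sub_nonneg.2 (hmin t ht)
  refine ⟨(w t₀, weight (fun t => w t - w t₀) g), {t ∈ S | w t - w t₀ = 0}, filter_subset _ _,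
    ⟨t₀, by simpa using ht₀⟩, fun v hv => ?_⟩
  rw [weight_eq_mul_sum_add w v (w t₀), add_le_add_iff_left, add_right_inj]
  exact ⟨weight_le_weight_of_mem_coordCone hu hv, weight_eq_weight_iff_of_mem_coordCone hu hv⟩

theorem exists_isLeast_weight_image_sumSlice {M d : ℕ} {V : Set (P → ℕ)} (w : P → ℤ)
    (hV : IsTruncationInvariant M V) (hinf : V.Infinite)
    (hd : ∀ g ∈ unboundedCells M V, #(saturated M g) ≤ d + 1) :
    ∃ k l : ℤ,
      (∀ᶠ n : ℕ in Filter.atTop, IsLeast (weight w '' sumSlice V n) (k * n + l)) ∧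
      IsEventuallyPolynomial (fun n => #{v ∈ sumSlice V n | weight w v = k * n + l}) d := by
  classical
  choose! line F hFS hF hline using
    fun g (hS : (saturated M g).Nonempty) => exists_line_le_weight w g hS
  have hcell {g : P → ℕ} (hg : g ∈ unboundedCells M V) : (saturated M g).Nonempty :=
    (mem_unboundedCells.1 hg).2.2
  have hminimizers {g : P → ℕ} (hg : g ∈ unboundedCells M V) (n : ℕ) :
      {v ∈ sumSlice V n | truncate M v = g ∧ weight w v = (line g).1 * n + (line g).2} =
        sumSlice (coordCone g (F g)) n := by
    rw [← filter_filter, filter_truncate_sumSlice hV hg]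
    ext v
    rw [mem_filter, mem_sumSlice, mem_sumSlice, and_assoc]
    refine and_congr_right ?_
    rintro rfl
    exact ⟨fun h => (hline g (hcell hg) v h.1).2.1 h.2, fun h =>
      have hv := coordCone_mono g (hFS g (hcell hg)) h
      ⟨hv, (hline g (hcell hg) v hv).2.2 h⟩⟩
  refine exists_isLeast_of_fiberwise_line (φ := truncate M) (line := line)
    (unboundedCells_nonempty hV hinf) (eventually_truncate_mem_unboundedCells hV)
    (fun n v hv hg => ?_) (fun g hg => ?_) fun g hg => ?_
  · obtain ⟨rfl, -⟩ := mem_sumSlice.1 hv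
    exact (hline _ (hcell hg) v ((truncate_eq_iff (mem_unboundedCells.1 hg).1).1 rfl)).1
  · filter_upwards [Filter.eventually_ge_atTop (∑ t, g t)] with n hn
    obtain ⟨v, hv⟩ := sumSlice_coordCone_nonempty (hF g (hcell hg)) hn
    rw [← hminimizers hg] at hv
    exact ⟨v, mem_filter.1 hv⟩
  · simp only [hminimizers hg]
    exact isEventuallyPolynomial_card_sumSlice_coordCone g (hF g (hcell hg))
      ((card_le_card (hFS g (hcell hg))).trans (hd g hg))

end Cones

section FiberCard

variable {μ ν κ : Type*} [Fintype μ] [Fintype ν] [DecidableEq κ]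

/-- The number of occurrences of each letter `t` in the word `f`; it determines `f` up to
permutations of its positions. -/
def fiberCard (f : μ → κ) : κ → ℕ := fun t => #{j | f j = t}

lemma fiberCard_le_card (f : μ → κ) (t : κ) : fiberCard f t ≤ Fintype.card μ := card_filter_le _ _

lemma fiberCard_pos_iff {f : μ → κ} {t : κ} : 0 < fiberCard f t ↔ ∃ j, f j = t := by
  simp [fiberCard, card_pos, filter_nonempty_iff]

lemma fiberCard_le_fiberCard_iff {f : μ → κ} {g : ν → κ} :
    fiberCard f ≤ fiberCard g ↔ ∃ e : μ ↪ ν, ∀ j, g (e j) = f j := by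
  constructor
  · intro h
    have hfiber (t : κ) : Nonempty ({j // f j = t} ↪ {j // g j = t}) :=
      Function.Embedding.nonempty_of_card_le <| by
        simpa only [Fintype.card_subtype, fiberCard] using h t
    let F (t : κ) := (hfiber t).some
    exact ⟨(Equiv.sigmaFiberEquiv f).symm.toEmbedding.trans
      ((Function.Embedding.sigmaMap (.refl κ) F).trans (Equiv.sigmaFiberEquiv g).toEmbedding),
      fun j => (F (f j) ⟨j, rfl⟩).2⟩
  · rintro ⟨e, he⟩ t
    exact card_le_card_of_injOn e (fun j hj => by simpa [he j] using hj) e.injective.injOn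

lemma fiberCard_eq_fiberCard_iff {f g : μ → κ} :
    fiberCard f = fiberCard g ↔ ∃ σ : Equiv.Perm μ, ∀ j, g (σ j) = f j := by
  constructor
  · intro h
    obtain ⟨e, he⟩ := fiberCard_le_fiberCard_iff.1 h.le
    exact ⟨e.equivOfFiniteSelfEmbedding, he⟩
  · rintro ⟨σ, hσ⟩
    refine le_antisymm (fiberCard_le_fiberCard_iff.2 ⟨σ.toEmbedding, hσ⟩)
      (fiberCard_le_fiberCard_iff.2 ⟨σ.symm.toEmbedding, fun j => ?_⟩)
    simp [← hσ]

lemma exists_fiberCard_eq [Fintype κ] {v : κ → ℕ} (h : ∑ t, v t = Fintype.card μ) :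
    ∃ f : μ → κ, fiberCard f = v := by
  have e : μ ≃ Σ t, Fin (v t) := Fintype.equivOfCardEq (by simp [h])
  refine ⟨fun j => (e j).1, funext fun t => ?_⟩
  rw [fiberCard, ← Fintype.card_subtype,
    Fintype.card_congr (e.subtypeEquiv (q := fun x => x.1 = t) fun _ => Iff.rfl),
    Fintype.card_congr (Equiv.sigmaSubtype t), Fintype.card_fin]

lemma sum_fiberCard [Fintype κ] (f : μ → κ) : ∑ t, fiberCard f t = Fintype.card μ :=
  (card_eq_sum_card_fiberwise fun _ _ => mem_univ _).symm

lemma image_fiberCard_preimage [Fintype κ] {n : ℕ} (hn : Fintype.card μ = n) (V : Set (κ → ℕ)) :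
    fiberCard '' ((fiberCard : (μ → κ) → κ → ℕ) ⁻¹' V) = sumSlice V n := by
  subst hn
  ext v
  rw [mem_coe, mem_sumSlice]
  constructor
  · rintro ⟨f, hf, rfl⟩
    exact ⟨sum_fiberCard f, hf⟩
  · rintro ⟨hsum, hv⟩
    obtain ⟨f, rfl⟩ := exists_fiberCard_eq hsum
    exact ⟨f, hv, rfl⟩

lemma weight_fiberCard [Fintype κ] (w : κ → ℤ) (f : μ → κ) :
    weight w (fiberCard f) = ∑ j, w (f j) := by
  simp only [weight, ← sum_fiberwise' univ f w, sum_const, nsmul_eq_mul, fiberCard]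

/-- The vector obtained from `v` by replacing one letter `T` with one letter `T'`; meaningful only
if `0 < v T`, because the subtraction is truncated. -/
def exchange (v : κ → ℕ) (T T' : κ) : κ → ℕ :=
  fun t => v t - (if t = T then 1 else 0) + if t = T' then 1 else 0

lemma fiberCard_update [DecidableEq μ] (f : μ → κ) (j : μ) (T : κ) :
    fiberCard (Function.update f j T) = exchange (fiberCard f) (f j) T := by
  funext t
  have hsplit (g : μ → κ) :
      fiberCard g t = #{i ∈ univ.erase j | g i = t} + if t = g j then 1 else 0 := by
    rw [fiberCard, ← insert_erase (mem_univ j), filter_insert]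
    split_ifs <;> simp_all [eq_comm]
  rw [exchange, hsplit f, hsplit (Function.update f j T), Function.update_self,
    Nat.add_sub_cancel]
  congr 2
  refine filter_congr fun i hi => ?_
  rw [Function.update_of_ne (ne_of_mem_erase hi)]

end FiberCard

lemma minimal_iff_forall_update {ι : Type*} {π : ι → Type*} [DecidableEq ι]
    [∀ i, PartialOrder (π i)] {p : (∀ i, π i) → Prop} (hp : Monotone p) {f : ∀ i, π i} :
    Minimal p f ↔ p f ∧ ∀ i, ∀ x < f i, ¬p (Function.update f i x) := by
  rw [minimal_iff_forall_lt]
  refine and_congr_right fun _ => ⟨fun h i x hx => h (update_lt_self_iff.2 hx), fun h g hg => ?_⟩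
  obtain ⟨hle, i, hi⟩ := Pi.lt_def.1 hg
  exact mt (hp (le_update_iff.2 ⟨le_rfl, fun j _ => hle j⟩)) (h i _ hi)

section Covers

variable {ι μ ν κ : Type*}

/-- `B` is a cover of the patterns `A i` if, wherever the columns of a pattern are placed among
the columns of `B`, some column of the pattern meets the column of `B` it is placed on. For
`ν = Fin n` these are the exponent matrices of the squarefree monomials of `I_n^∨`. -/
def IsCover (A : ι → μ → Finset κ) (B : ν → Finset κ) : Prop :=
  ∀ i (e : μ ↪ ν), ∃ j, ¬Disjoint (A i j) (B (e j))

lemma monotone_isCover (A : ι → μ → Finset κ) : Monotone (IsCover (ν := ν) A) :=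
  fun _ _ hBC hB i e => (hB i e).imp fun j => mt (.mono_right (hBC (e j)))

lemma exists_minimal_isCover [Finite ν] [Finite κ] {A : ι → μ → Finset κ}
    (hA : ∀ i, ∃ j, A i j ≠ ∅) : ∃ B : ν → Finset κ, Minimal (IsCover A) B := by
  classical
  have := Fintype.ofFinite κ
  have huniv : IsCover A (fun _ : ν => univ) := fun i _ =>
    (hA i).imp fun j hj => by simpa [disjoint_iff_inter_eq_empty] using hj
  obtain ⟨B, -, hB⟩ := exists_minimal_le_of_wellFoundedLT _ _ huniv
  exact ⟨B, hB⟩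

variable [DecidableEq κ] [Fintype μ]

/-- The column multiplicities of covers of the patterns `A i`. -/
def coverCounts (A : ι → μ → Finset κ) : Set (Finset κ → ℕ) :=
  {v | ∀ i (f : μ → Finset κ), fiberCard f ≤ v → ∃ j, ¬Disjoint (A i j) (f j)}

/-- The column multiplicities of minimal covers of the patterns `A i`: no column may be replaced
by a proper subset of it. -/
def minCoverCounts (A : ι → μ → Finset κ) : Set (Finset κ → ℕ) :=
  {v | v ∈ coverCounts A ∧ ∀ T, 0 < v T → ∀ S < T, exchange v T S ∉ coverCounts A}

lemma isCover_iff_fiberCard_mem [Fintype ν] {A : ι → μ → Finset κ} {B : ν → Finset κ} :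
    IsCover A B ↔ fiberCard B ∈ coverCounts A := by
  constructor
  · intro h i f hf
    obtain ⟨e, he⟩ := fiberCard_le_fiberCard_iff.1 hf
    simpa only [he] using h i e
  · exact fun h i e => h i (B ∘ e) (fiberCard_le_fiberCard_iff.2 ⟨e, fun _ => rfl⟩)

lemma minimal_isCover_iff_fiberCard_mem [Fintype ν] {A : ι → μ → Finset κ} {B : ν → Finset κ} :
    Minimal (IsCover A) B ↔ fiberCard B ∈ minCoverCounts A := by
  classical
  rw [minimal_iff_forall_update (monotone_isCover A)]
  simp only [isCover_iff_fiberCard_mem, fiberCard_update, minCoverCounts, Set.mem_ofPred_eq,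
    fiberCard_pos_iff, forall_exists_index, forall_apply_eq_imp_iff]

lemma isTruncationInvariant_coverCounts (A : ι → μ → Finset κ) :
    IsTruncationInvariant (Fintype.card μ) (coverCounts A) := fun v => by
  have hle (f : μ → Finset κ) : fiberCard f ≤ truncate (Fintype.card μ) v ↔ fiberCard f ≤ v :=
    forall_congr' fun t => le_min_iff.trans (and_iff_left (fiberCard_le_card f t))
  simp only [coverCounts, Set.mem_ofPred_eq, hle]

-- The height exceeds that for `coverCounts` by one because minimality tests `v` with one
-- column removed.
lemma isTruncationInvariant_minCoverCounts (A : ι → μ → Finset κ) :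
    IsTruncationInvariant (Fintype.card μ + 1) (minCoverCounts A) := fun v => by
  have hcover : truncate (Fintype.card μ + 1) v ∈ coverCounts A ↔ v ∈ coverCounts A :=
    (isTruncationInvariant_coverCounts A).mem_iff_of_truncate_eq <| funext fun t => by
      simp only [truncate]; lia
  have hexchange (T S : Finset κ) :
      exchange (truncate (Fintype.card μ + 1) v) T S ∈ coverCounts A ↔
        exchange v T S ∈ coverCounts A :=
    (isTruncationInvariant_coverCounts A).mem_iff_of_truncate_eq <| funext fun t => by
      simp only [truncate, exchange]; lia
  have hpos (T : Finset κ) : 0 < truncate (Fintype.card μ + 1) v T ↔ 0 < v T := by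
    simp only [truncate]; lia
  simp only [minCoverCounts, Set.mem_ofPred_eq, hcover, hexchange, hpos]

lemma infinite_minCoverCounts [Finite κ] {A : ι → μ → Finset κ} (hA : ∀ i, ∃ j, A i j ≠ ∅) :
    (minCoverCounts A).Infinite := by
  have := Fintype.ofFinite κ
  refine .of_image (fun v => ∑ t, v t) (Set.infinite_univ.mono fun n _ => ?_)
  obtain ⟨B, hB⟩ := exists_minimal_isCover (ν := Fin n) hA
  exact ⟨_, minimal_isCover_iff_fiberCard_mem.1 hB, by simp [sum_fiberCard]⟩

variable [Fintype κ]

/-- Exchanging a column of a minimal cover for a proper subset of it is invisible to `coverCounts`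
if both multiplicities exceed the number of columns of the patterns, which contradicts
minimality. -/
lemma isAntichain_saturated {A : ι → μ → Finset κ} {v : Finset κ → ℕ}
    (hv : v ∈ minCoverCounts A) :
    IsAntichain (· ⊆ ·) (saturated (Fintype.card μ + 1) v : Set (Finset κ)) := by
  intro S hS T hT hne hST
  rw [mem_coe, mem_saturated] at hS hT
  refine hv.2 T (by lia) S (lt_of_le_of_ne hST hne) ?_
  refine ((isTruncationInvariant_coverCounts A).mem_iff_of_truncate_eq ?_).1 hv.1
  funext t
  simp only [truncate, exchange]
  split_ifs <;> grind

lemma card_saturated_le {A : ι → μ → Finset κ} {v : Finset κ → ℕ} (hv : v ∈ minCoverCounts A) :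
    #(saturated (Fintype.card μ + 1) v) ≤
      (Fintype.card κ).choose (Fintype.card κ / 2) - 1 + 1 := by
  rw [Nat.sub_add_cancel (Nat.choose_pos (Nat.div_le_self _ _))]
  exact (isAntichain_saturated hv).sperner

end Covers

section Monomials

variable {c n m s : ℕ}

/-- The exponent vector of the squarefree monomial `matMon K B`. -/
def exponentVector (B : Fin n → Finset (Fin c)) : Fin c × Fin n →₀ ℕ :=
  Finsupp.equivFunOnFinite.symm fun v => if v.1 ∈ B v.2 then 1 else 0

lemma exponentVector_apply (B : Fin n → Finset (Fin c)) (v : Fin c × Fin n) :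
    exponentVector B v = if v.1 ∈ B v.2 then 1 else 0 := rfl

lemma exponentVector_le_exponentVector_iff {B B' : Fin n → Finset (Fin c)} :
    exponentVector B ≤ exponentVector B' ↔ B ≤ B' := by
  simp only [Finsupp.le_def, exponentVector_apply, Prod.forall, Pi.le_def]
  rw [forall_comm]
  refine forall_congr' fun j => forall_congr' fun i => ?_
  split_ifs <;> simp_all

section CommSemiring

variable (K : Type*) [CommSemiring K]

lemma matMon_eq_monomial (B : Fin n → Finset (Fin c)) :
    matMon K B = monomial (exponentVector B) 1 := by
  rw [monomial_eq, C_1, one_mul, Finsupp.prod_fintype _ _ fun _ => pow_zero _,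
    Fintype.prod_prod_type_right]
  simp [matMon, exponentVector_apply, pow_ite, prod_ite_mem]

lemma rename_matMon (B : Fin n → Finset (Fin c)) (σ : Equiv.Perm (Fin n)) :
    rename (fun v : Fin c × Fin n => (v.1, σ v.2)) (matMon K B) = matMon K (B ∘ σ.symm) := by
  rw [matMon, matMon, map_prod, ← Equiv.prod_comp σ fun j => ∏ i ∈ (B ∘ σ.symm) j, X (i, j)]
  simp [map_prod]

lemma matMon_dvd_matMon {B B' : Fin n → Finset (Fin c)} (h : B ≤ B') :
    matMon K B ∣ matMon K B' :=
  prod_dvd_prod_of_dvd _ _ fun j _ => prod_dvd_prod_of_subset _ _ _ (h j)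

lemma isMinGen_iff_minimal {I : Ideal (MvPolynomial (Fin c × Fin n) K)}
    {B : Fin n → Finset (Fin c)} :
    IsMinGen K I B ↔ Minimal (fun B => matMon K B ∈ I) B := by
  simp only [IsMinGen, minimal_iff_forall_lt, lt_iff_le_and_ne, and_imp, Pi.le_def,
    ne_eq]

lemma orbitOf_eq_image (B : Fin n → Finset (Fin c)) :
    orbitOf K B = matMon K '' {C | fiberCard C = fiberCard B} := by
  ext q
  simp only [orbitOf, rename_matMon, fiberCard_eq_fiberCard_iff, Set.mem_image,
    Set.mem_ofPred_eq]
  constructor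
  · rintro ⟨σ, rfl⟩
    exact ⟨_, ⟨σ.symm, fun _ => rfl⟩, rfl⟩
  · rintro ⟨C, ⟨σ, hσ⟩, rfl⟩
    exact ⟨σ.symm, congrArg _ (funext fun j => (hσ j).symm)⟩

end CommSemiring

variable (K : Type*) [CommSemiring K] [Nontrivial K]

lemma matMon_injective : Function.Injective (matMon K : (Fin n → Finset (Fin c)) → _) := by
  intro B B' h
  rw [matMon_eq_monomial, matMon_eq_monomial] at h
  have h := monomial_left_injective one_ne_zero h
  exact le_antisymm (exponentVector_le_exponentVector_iff.1 h.le)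
    (exponentVector_le_exponentVector_iff.1 h.ge)

lemma totalDegree_matMon (B : Fin n → Finset (Fin c)) :
    (matMon K B).totalDegree = ∑ j, #(B j) := by
  rw [matMon_eq_monomial, totalDegree_monomial _ one_ne_zero,
    Finsupp.sum_fintype _ _ fun _ => rfl, Fintype.sum_prod_type_right]
  simp [exponentVector_apply]

lemma matMon_mem_span_image_iff {𝓑 : Set (Fin n → Finset (Fin c))} {B : Fin n → Finset (Fin c)} :
    matMon K B ∈ Ideal.span (matMon K '' 𝓑) ↔ ∃ B' ∈ 𝓑, B' ≤ B := by
  have himage : matMon K '' 𝓑 = (fun e => monomial e (1 : K)) '' (exponentVector '' 𝓑) := by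
    rw [Set.image_image]
    exact Set.image_congr fun B _ => matMon_eq_monomial K B
  classical
  rw [himage, mem_ideal_span_monomial_image, matMon_eq_monomial, support_monomial,
    if_neg one_ne_zero]
  simp [exponentVector_le_exponentVector_iff]

lemma matMon_mem_dualIdeal_iff {I : Ideal (MvPolynomial (Fin c × Fin n) K)}
    {B : Fin n → Finset (Fin c)} :
    matMon K B ∈ dualIdeal K I ↔ matMon K (fun j => (B j)ᶜ) ∉ I := by
  have hspan : dualIdeal K I =
      Ideal.span (matMon K '' {B | matMon K (fun j => (B j)ᶜ) ∉ I}) := by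
    simp only [dualIdeal, Set.image, Set.mem_ofPred_eq, eq_comm]
  rw [hspan, matMon_mem_span_image_iff]
  refine ⟨fun ⟨B', hB', hle⟩ hB => hB' (I.mem_of_dvd (matMon_dvd_matMon K fun j => ?_) hB),
    fun h => ⟨B, h, le_rfl⟩⟩
  exact compl_le_compl (hle j)

lemma exists_perm_pad_le_iff (hn : m ≤ n) {A : Fin m → Finset (Fin c)}
    {C : Fin n → Finset (Fin c)} :
    (∃ σ : Equiv.Perm (Fin n), pad n A ∘ σ.symm ≤ C) ↔
      ∃ e : Fin m ↪ Fin n, ∀ j, A j ⊆ C (e j) := by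
  constructor
  · rintro ⟨σ, h⟩
    refine ⟨(Fin.castLEEmb hn).trans σ.toEmbedding, fun j => ?_⟩
    simpa [pad] using h (σ (Fin.castLE hn j))
  · rintro ⟨e, h⟩
    obtain ⟨σ, hσ⟩ := Equiv.Perm.exists_extending_pair (Fin.castLE hn) e
      (Fin.castLE_injective hn) e.injective
    refine ⟨σ, fun k => ?_⟩
    obtain ⟨j, rfl⟩ := σ.surjective k
    by_cases hj : (j : ℕ) < m
    · simpa [pad, hj, ← hσ] using h ⟨j, hj⟩
    · simp [pad, hj]

lemma matMon_mem_chainIdeal_iff (hn : m ≤ n) {A : Fin s → Fin m → Finset (Fin c)}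
    {C : Fin n → Finset (Fin c)} :
    matMon K C ∈ chainIdeal K A n ↔ ∃ i, ∃ e : Fin m ↪ Fin n, ∀ j, A i j ⊆ C (e j) := by
  have hspan : chainIdeal K A n = Ideal.span (matMon K ''
      {B | ∃ (i : Fin s) (σ : Equiv.Perm (Fin n)), B = pad n (A i) ∘ σ.symm}) := by
    simp only [chainIdeal, rename_matMon]
    congr 1
    aesop
  rw [hspan, matMon_mem_span_image_iff]
  simp only [Set.mem_ofPred_eq, ← exists_perm_pad_le_iff hn]
  aesop

lemma matMon_mem_dualIdeal_chainIdeal_iff (hn : m ≤ n) {A : Fin s → Fin m → Finset (Fin c)}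
    {B : Fin n → Finset (Fin c)} :
    matMon K B ∈ dualIdeal K (chainIdeal K A n) ↔ IsCover A B := by
  simp only [matMon_mem_dualIdeal_iff, matMon_mem_chainIdeal_iff K hn, IsCover,
    subset_compl_iff_disjoint_right, not_exists, not_forall]

lemma isMinGen_dualIdeal_iff (hn : m ≤ n) {A : Fin s → Fin m → Finset (Fin c)}
    {B : Fin n → Finset (Fin c)} :
    IsMinGen K (dualIdeal K (chainIdeal K A n)) B ↔ fiberCard B ∈ minCoverCounts A := by
  rw [isMinGen_iff_minimal, ← minimal_isCover_iff_fiberCard_mem]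
  simp only [matMon_mem_dualIdeal_chainIdeal_iff K hn]

lemma totalDegree_matMon_eq_weight (B : Fin n → Finset (Fin c)) :
    ((matMon K B).totalDegree : ℤ) = weight (fun T => #T) (fiberCard B) := by
  rw [totalDegree_matMon, weight_fiberCard, Nat.cast_sum]

lemma ncard_image_orbitOf (V : Set (Finset (Fin c) → ℕ)) :
    (orbitOf K '' {B : Fin n → Finset (Fin c) | fiberCard B ∈ V}).ncard = #(sumSlice V n) := by
  have hinj : Set.InjOn
      (fun v => matMon K '' {B : Fin n → Finset (Fin c) | fiberCard B = v}) (sumSlice V n) := by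
    intro v hv v' _ h
    obtain ⟨B, rfl⟩ := exists_fiberCard_eq (μ := Fin n) (by simpa using (mem_sumSlice.1 hv).1)
    exact ((matMon_injective K).image_injective h).subset (rfl : fiberCard B = fiberCard B)
  rw [← Set.ncard_coe_finset, ← hinj.ncard_image,
    ← image_fiberCard_preimage (Fintype.card_fin n) V, Set.image_image]
  exact congrArg Set.ncard (Set.image_congr fun B _ => orbitOf_eq_image K B)

end Monomials

section Orbits

variable {c n m s : ℕ}

section CommSemiring

variable (K : Type*) [CommSemiring K]

/-- The `Sym(n)`-orbits of the minimal monomial generators of `I`. -/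
def minGenOrbits (I : Ideal (MvPolynomial (Fin c × Fin n) K)) :
    Set (Set (MvPolynomial (Fin c × Fin n) K)) :=
  {O | ∃ B, IsMinGen K I B ∧ O = orbitOf K B}

/-- The least degree of a minimal monomial generator of `I`, or `0` if there is none. -/
def initialDegree (I : Ideal (MvPolynomial (Fin c × Fin n) K)) : ℕ :=
  sInf {d | ∃ B, IsMinGen K I B ∧ (matMon K B).totalDegree = d}

/-- The `Sym(n)`-orbits of the minimal monomial generators of least degree of `I`. -/
def initialOrbits (I : Ideal (MvPolynomial (Fin c × Fin n) K)) :
    Set (Set (MvPolynomial (Fin c × Fin n) K)) :=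
  {O | ∃ B, IsMinGen K I B ∧ (matMon K B).totalDegree = initialDegree K I ∧ O = orbitOf K B}

end CommSemiring

variable (K : Type*) [CommSemiring K] [Nontrivial K]

lemma ncard_minGenOrbits (A : Fin s → Fin m → Finset (Fin c)) (hn : m ≤ n) :
    (minGenOrbits K (dualIdeal K (chainIdeal K A n))).ncard =
      #(sumSlice (minCoverCounts A) n) := by
  rw [← ncard_image_orbitOf K]
  simp only [minGenOrbits, isMinGen_dualIdeal_iff K hn, Set.image, Set.mem_ofPred_eq, eq_comm]

lemma initialDegree_eq_of_isLeast {A : Fin s → Fin m → Finset (Fin c)} (hn : m ≤ n) {a : ℤ}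
    (ha : IsLeast (weight (fun T : Finset (Fin c) => #T) '' sumSlice (minCoverCounts A) n) a) :
    initialDegree K (dualIdeal K (chainIdeal K A n)) = a := by
  have hdegrees : (fun d : ℕ => (d : ℤ)) '' {d : ℕ | ∃ B : Fin n → Finset (Fin c),
      IsMinGen K (dualIdeal K (chainIdeal K A n)) B ∧ (matMon K B).totalDegree = d} =
        weight (fun T : Finset (Fin c) => #T) '' sumSlice (minCoverCounts A) n := by
    rw [← image_fiberCard_preimage (Fintype.card_fin n), Set.image_image]
    ext d
    simp [isMinGen_dualIdeal_iff K hn, ← totalDegree_matMon_eq_weight K]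
  rw [← hdegrees] at ha
  obtain ⟨⟨d, hd, rfl⟩, hle⟩ := ha
  have : IsLeast _ d := ⟨hd, fun e he => Nat.cast_le.1 (hle ⟨e, he, rfl⟩)⟩
  rw [initialDegree, this.csInf_eq]

lemma ncard_initialOrbits (A : Fin s → Fin m → Finset (Fin c)) (hn : m ≤ n) :
    (initialOrbits K (dualIdeal K (chainIdeal K A n))).ncard =
      #{v ∈ sumSlice (minCoverCounts A) n |
        weight (fun T => #T) v = initialDegree K (dualIdeal K (chainIdeal K A n))} := by
  set d := initialDegree K (dualIdeal K (chainIdeal K A n))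
  have hslice : {v ∈ sumSlice (minCoverCounts A) n | weight (fun T => #T) v = d} =
      sumSlice {v ∈ minCoverCounts A | weight (fun T => #T) v = d} n := by
    ext v
    simp only [mem_filter, mem_sumSlice, Set.mem_ofPred_eq, and_assoc]
  rw [hslice, ← ncard_image_orbitOf K]
  simp only [initialOrbits, isMinGen_dualIdeal_iff K hn, Set.image, Set.mem_ofPred_eq,
    ← totalDegree_matMon_eq_weight K, Nat.cast_inj, and_assoc, eq_comm, d]

theorem isEventuallyPolynomial_ncard_minGenOrbits (A : Fin s → Fin m → Finset (Fin c)) :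
    IsEventuallyPolynomial
      (fun n => (minGenOrbits K (dualIdeal K (chainIdeal K A n))).ncard)
      (c.choose (c / 2) - 1) := by
  refine (isEventuallyPolynomial_card_sumSlice (isTruncationInvariant_minCoverCounts A)
    fun g hg => ?_).congr ?_
  · simpa using card_saturated_le (mem_unboundedCells.1 hg).2.1
  · filter_upwards [Filter.eventually_ge_atTop m] with n hn
    exact ncard_minGenOrbits K A hn

theorem exists_initialDegree_eq_and_isEventuallyPolynomial_ncard_initialOrbits
    {A : Fin s → Fin m → Finset (Fin c)} (hA : ∀ i, ∃ j, A i j ≠ ∅) :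
    ∃ α β : ℤ,
      (∀ᶠ n : ℕ in Filter.atTop,
        initialDegree K (dualIdeal K (chainIdeal K A n)) = α * n + β) ∧
      IsEventuallyPolynomial
        (fun n => (initialOrbits K (dualIdeal K (chainIdeal K A n))).ncard)
        (c.choose (c / 2) - 1) := by
  obtain ⟨α, β, hleast, hcard⟩ := exists_isLeast_weight_image_sumSlice
    (d := c.choose (c / 2) - 1) (fun T => #T) (isTruncationInvariant_minCoverCounts A)
    (infinite_minCoverCounts hA)
    fun g hg => by simpa using card_saturated_le (mem_unboundedCells.1 hg).2.1
  have hdegree : ∀ᶠ n : ℕ in Filter.atTop,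
      initialDegree K (dualIdeal K (chainIdeal K A n)) = α * n + β := by
    filter_upwards [hleast, Filter.eventually_ge_atTop m] with n hleast hn
    exact initialDegree_eq_of_isLeast K hn hleast
  refine ⟨α, β, hdegree, hcard.congr ?_⟩
  filter_upwards [hdegree, Filter.eventually_ge_atTop m] with n hdegree hn
  rw [ncard_initialOrbits K A hn, hdegree]

end Orbits

theorem dual_min_gens_orbit_count_polynomial_general (K : Type*) [CommSemiring K] [Nontrivial K]
    {c m s : ℕ} (A : Fin s → Fin m → Finset (Fin c)) (hA : ∀ i, ∃ j, A i j ≠ ∅) :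
    (∃ (p : Polynomial ℚ) (N : ℕ), m ≤ N ∧ p.degree ≤ (c.choose (c / 2) - 1 : ℕ) ∧
      ∀ n : ℕ, N ≤ n →
        ((minGenOrbits K (dualIdeal K (chainIdeal K A n))).ncard : ℚ) = p.eval (n : ℚ)) ∧
    ∃ (α β : ℤ) (q : Polynomial ℚ) (N : ℕ), m ≤ N ∧ q.degree ≤ (c.choose (c / 2) - 1 : ℕ) ∧
      ∀ n : ℕ, N ≤ n →
        (initialDegree K (dualIdeal K (chainIdeal K A n)) : ℤ) = α * n + β ∧
        ((initialOrbits K (dualIdeal K (chainIdeal K A n))).ncard : ℚ) = q.eval (n : ℚ) := by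
  obtain ⟨p, hp, hcard⟩ := isEventuallyPolynomial_ncard_minGenOrbits K A
  obtain ⟨α, β, hdegree, q, hq, hinitial⟩ :=
    exists_initialDegree_eq_and_isEventuallyPolynomial_ncard_initialOrbits K hA
  obtain ⟨N, hmN, hN⟩ := (Filter.atTop_basis' m).eventually_iff.1 hcard
  obtain ⟨N', hmN', hN'⟩ := (Filter.atTop_basis' m).eventually_iff.1 (hdegree.and hinitial)
  exact ⟨⟨p, N, hmN, hp, hN⟩, α, β, q, N', hmN', hq, hN'⟩

/-- **Counting minimal generators of the Alexander dual.**  (1) The number of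
`Sym(n)`-orbits of minimal monomial generators of `I_n^∨` is eventually a polynomial in `n`
of degree at most `binom(c, ⌊c/2⌋) − 1`.  (2) The least degree of a minimal generator of
`I_n^∨` is eventually a linear function `d(n) = αn + β`, and the number of `Sym(n)`-orbits
of minimal generators of degree `d(n)` is eventually a polynomial in `n`. -/
theorem dual_min_gens_orbit_count_polynomial (K : Type*) [Field K] {c m s : ℕ}
    (hc : 0 < c) (hm : 0 < m) (hs : 0 < s)
    (A : Fin s → Fin m → Finset (Fin c)) (hA : ∀ i, ∃ j, A i j ≠ ∅) :
    (∃ (p : Polynomial ℚ) (N : ℕ), m ≤ N ∧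
        p.degree ≤ (Nat.choose c (c / 2) - 1 : ℕ) ∧
        ∀ n : ℕ, N ≤ n →
          ((Set.ncard {O : Set (MvPolynomial (Fin c × Fin n) K) |
              ∃ B : Fin n → Finset (Fin c),
                IsMinGen K (dualIdeal K (chainIdeal K A n)) B ∧ O = orbitOf K B} : ℚ) =
            p.eval (n : ℚ))) ∧
    (∃ (α β : ℤ) (q : Polynomial ℚ) (N' : ℕ), m ≤ N' ∧
        ∀ n : ℕ, N' ≤ n →
          (((sInf {d : ℕ | ∃ B : Fin n → Finset (Fin c),
              IsMinGen K (dualIdeal K (chainIdeal K A n)) B ∧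
              (matMon K B : MvPolynomial (Fin c × Fin n) K).totalDegree = d} : ℕ) : ℤ) =
            α * (n : ℤ) + β) ∧
          ((Set.ncard {O : Set (MvPolynomial (Fin c × Fin n) K) |
              ∃ B : Fin n → Finset (Fin c),
                IsMinGen K (dualIdeal K (chainIdeal K A n)) B ∧
                (matMon K B : MvPolynomial (Fin c × Fin n) K).totalDegree =
                  sInf {d : ℕ | ∃ B' : Fin n → Finset (Fin c),
                    IsMinGen K (dualIdeal K (chainIdeal K A n)) B' ∧
                    (matMon K B' : MvPolynomial (Fin c × Fin n) K).totalDegree = d} ∧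
                O = orbitOf K B} : ℚ) = q.eval (n : ℚ))) := by
  obtain ⟨hp, α, β, q, N', hN', -, hq⟩ := dual_min_gens_orbit_count_polynomial_general K A hA
  exact ⟨hp, α, β, q, N', hN', hq⟩

end
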